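/- Fix integers q ≥ 3 and d ≥ 2, a real β ≥ 1, and a symmetric interaction matrix A ∈ ℝ_{≥0}^{q×q} satisfying: (a) A ≥ 1_q 1_q^T entrywise with strict inequality in at least one entry; (b) |𝓜(d,A)| ≥ 2 and there exist c ∈ [q] and a₁, a₂ ∈ 𝓜(d,A) with A_{c,a₁} ≠ A_{c,a₂}. Let B = B(β,A). Then for every strictly monotone function φ : [0,1] → ℝ there does NOT exist a probability distribution ξ on d-tuples (λ^{(1)},…,λ^{(d)}) of external fields λ^{(i)} ∈ ℝ_{≥0}^{d×(q+1)} such that for every probability distribution μ on ([q] ∪ {c*})^d one has the entrywise identity φ(F_{B,d}(μ)) = E_{(λ^{(1)},…,λ^{(d)})∼ξ}[ φ( F_{B,d}( ⊗_{i=1}^d (λ^{(i)} ⋆ μ)_i ) ) ]. -/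

import Mathlib

open scoped BigOperators Classical
open MeasureTheory

/-- A probability distribution on a finite type, represented as a nonnegative
function summing to one. -/
def IsProbDist {ι : Type*} [Fintype ι] (μ : ι → ℝ) : Prop :=
  (∀ x, 0 ≤ μ x) ∧ ∑ x, μ x = 1

/-- The unnormalized belief propagation functional `G_c(μ) = E_{τ∼μ}[∏ i, A c (τ i)]`. -/
noncomputable def Gfun {q d : ℕ} (A : Matrix (Fin q) (Fin q) ℝ)
    (μ : (Fin d → Fin q) → ℝ) (c : Fin q) : ℝ :=
  ∑ σ : Fin d → Fin q, μ σ * ∏ i, A c (σ i)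

/-- The belief propagation functional `F_{A,d,c}(μ) = G_c(μ) / ∑ b, G_b(μ)`. -/
noncomputable def Ffun {q d : ℕ} (A : Matrix (Fin q) (Fin q) ℝ)
    (μ : (Fin d → Fin q) → ℝ) (c : Fin q) : ℝ :=
  Gfun A μ c / ∑ b, Gfun A μ b

/-- The product measure on `[k]^d` with marginals `ν i`. -/
noncomputable def prodMeasure {d k : ℕ} (ν : Fin d → Fin k → ℝ) :
    (Fin d → Fin k) → ℝ :=
  fun σ => ∏ i, ν i (σ i)

/-- The point mass `δ_b` at a spin `b`. -/
noncomputable def pointMass {k : ℕ} (b : Fin k) : Fin k → ℝ :=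
  fun c => if c = b then 1 else 0

/-- The marginal of a distribution `μ` on `[k]^d` at coordinate `i`. -/
noncomputable def marg {d k : ℕ} (μ : (Fin d → Fin k) → ℝ) (i : Fin d) : Fin k → ℝ :=
  fun b => ∑ σ : Fin d → Fin k, if σ i = b then μ σ else 0

/-- The tilt `λ ⋆ μ` of a distribution `μ` on `[k]^d` by an external field `λ`. -/
noncomputable def tilt {d k : ℕ} (lam : Fin d → Fin k → ℝ)
    (μ : (Fin d → Fin k) → ℝ) : (Fin d → Fin k) → ℝ :=
  fun σ => (μ σ * ∏ i, lam i (σ i)) / ∑ σ' : Fin d → Fin k, μ σ' * ∏ i, lam i (σ' i)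

/-- The `(q+1) × (q+1)` interaction matrix `B(β,A) = [[β, 1ᵀ],[1, A]]`; the index `0`
plays the role of the special spin `c*`. -/
noncomputable def Bmat {q : ℕ} (β : ℝ) (A : Matrix (Fin q) (Fin q) ℝ) :
    Matrix (Fin (q+1)) (Fin (q+1)) ℝ :=
  Matrix.of fun i j =>
    if hi : i = 0 then (if j = 0 then β else 1)
    else if hj : j = 0 then 1 else A (i.pred hi) (j.pred hj)

/-- `𝓜(d,A) = argmax_{b} ∑ c, A c b ^ d`. -/
def Mset {q : ℕ} (d : ℕ) (A : Matrix (Fin q) (Fin q) ℝ) : Set (Fin q) :=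
  {b | ∀ b', ∑ c, A c b' ^ d ≤ ∑ c, A c b ^ d}

/-- `max_{b ∈ [q]} ∑ c, A c b ^ d` (as a supremum over the finite nonempty type `Fin q`). -/
noncomputable def maxCol {q : ℕ} (d : ℕ) (A : Matrix (Fin q) (Fin q) ℝ) : ℝ :=
  ⨆ b, ∑ c, A c b ^ d

/-!
Only the coordinate of the spin `c*` matters. If two columns `b₁, b₂` of the interaction matrix
have the same sum of `d`-th powers `M` and the same entry in row `c*`, then the mixture
`½ δ_{b₁}^{⊗d} + ½ δ_{b₂}^{⊗d}` and both its components have the same value `K` of `F_{c*}`.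

* At a component `δ_{b}^{⊗d}`, the right-hand side averages values in `{0, K}`, the value `0`
  arising exactly when a field kills the component; so almost surely no field does.
* At the mixture, each tilted marginal is then a nondegenerate mixture
  `p_i δ_{b₁} + (1 - p_i) δ_{b₂}`. By AM-GM and strict convexity of `x ↦ x ^ d`, the normalisation
  of `F` drops strictly below `M` while the numerator at `c*` is unchanged, so the right-hand side
  averages values strictly above `K`.
-/

section PowerSums

variable {ι κ : Type*} [Fintype ι] [Fintype κ]

lemma div_sum_mem_Icc {g : κ → ℝ} (hg : ∀ c, 0 ≤ g c) (c : κ) :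
    g c / ∑ c', g c' ∈ Set.Icc (0 : ℝ) 1 := by
  have hsum : 0 ≤ ∑ c', g c' := Finset.sum_nonneg fun c' _ => hg c'
  exact ⟨div_nonneg (hg c) hsum,
    div_le_one_of_le₀ (Finset.single_le_sum (fun c' _ => hg c') (Finset.mem_univ c)) hsum⟩

lemma prod_le_sum_pow_card_div_card [Nonempty ι] {x : ι → ℝ} (hx : ∀ i, 0 ≤ x i) :
    ∏ i, x i ≤ (∑ i, x i ^ Fintype.card ι) / Fintype.card ι := by
  have amgm := Real.geom_mean_le_arith_mean_weighted Finset.univ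
    (fun _ : ι => (Fintype.card ι : ℝ)⁻¹) (fun i => x i ^ Fintype.card ι)
    (fun _ _ => by positivity) (by simp) (fun i _ => pow_nonneg (hx i) _)
  simp_rw [Real.pow_rpow_inv_natCast (hx _) Fintype.card_ne_zero] at amgm
  rwa [← Finset.mul_sum, inv_mul_eq_div] at amgm

lemma sum_prod_lt_of_forall_sum_pow_card_lt [Nonempty ι] {f : ι → κ → ℝ} {M : ℝ}
    (hf : ∀ i c, 0 ≤ f i c) (hM : ∀ i, ∑ c, f i c ^ Fintype.card ι < M) :
    ∑ c, ∏ i, f i c < M :=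
  calc ∑ c, ∏ i, f i c
      ≤ ∑ c, (∑ i, f i c ^ Fintype.card ι) / Fintype.card ι :=
        Finset.sum_le_sum fun c _ => prod_le_sum_pow_card_div_card (hf · c)
    _ = (∑ i, ∑ c, f i c ^ Fintype.card ι) / Fintype.card ι := by
        rw [← Finset.sum_div, Finset.sum_comm]
    _ < (∑ _i : ι, M) / Fintype.card ι := by
        gcongr with i
        · exact Finset.univ_nonempty
        · exact hM i
    _ = M := by simp

lemma sum_mix_pow_lt {n : ℕ} (hn : 2 ≤ n) {u v : κ → ℝ} (hu : ∀ c, 0 ≤ u c) (hv : ∀ c, 0 ≤ v c)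
    (huv : ∃ c, u c ≠ v c) {p : ℝ} (hp : p ∈ Set.Ioo 0 1) :
    ∑ c, (p * u c + (1 - p) * v c) ^ n < p * ∑ c, u c ^ n + (1 - p) * ∑ c, v c ^ n := by
  have hconv := strictConvexOn_pow hn
  have hp' : 0 < 1 - p := sub_pos.2 hp.2
  obtain ⟨c₀, hc₀⟩ := huv
  simp_rw [Finset.mul_sum, ← Finset.sum_add_distrib]
  exact Finset.sum_lt_sum
    (fun c _ => hconv.convexOn.2 (hu c) (hv c) hp.1.le hp'.le (add_sub_cancel p 1))
    ⟨c₀, Finset.mem_univ _, hconv.2 (hu c₀) (hv c₀) hc₀ hp.1 hp' (add_sub_cancel p 1)⟩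

lemma sum_prod_mix_lt (hι : 2 ≤ Fintype.card ι) {u v : κ → ℝ} (hu : ∀ c, 0 ≤ u c)
    (hv : ∀ c, 0 ≤ v c) (huv : ∃ c, u c ≠ v c)
    (hsum : ∑ c, v c ^ Fintype.card ι = ∑ c, u c ^ Fintype.card ι)
    {p : ι → ℝ} (hp : ∀ i, p i ∈ Set.Ioo 0 1) :
    ∑ c, ∏ i, (p i * u c + (1 - p i) * v c) < ∑ c, u c ^ Fintype.card ι := by
  have : Nonempty ι := Fintype.card_pos_iff.1 (by omega)
  refine sum_prod_lt_of_forall_sum_pow_card_lt (fun i c => ?_) fun i => ?_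
  · exact add_nonneg (mul_nonneg (hp i).1.le (hu c)) (mul_nonneg (sub_nonneg.2 (hp i).2.le) (hv c))
  · calc ∑ c, (p i * u c + (1 - p i) * v c) ^ Fintype.card ι
        < p i * ∑ c, u c ^ Fintype.card ι + (1 - p i) * ∑ c, v c ^ Fintype.card ι :=
          sum_mix_pow_lt hι hu hv huv (hp i)
      _ = ∑ c, u c ^ Fintype.card ι := by rw [hsum]; ring

end PowerSums

section MonotoneIntegral

variable {Ω : Type*} [MeasurableSpace Ω] {ξ : Measure Ω} {φ : ℝ → ℝ} {a b K : ℝ} {X : Ω → ℝ}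

lemma integrable_comp_of_monotoneOn_Icc [IsFiniteMeasure ξ] (hab : a ≤ b)
    (hφ : MonotoneOn φ (Set.Icc a b)) (hX : Measurable X) (hXab : ∀ᵐ ω ∂ξ, X ω ∈ Set.Icc a b) :
    Integrable (fun ω => φ (X ω)) ξ := by
  let ψ : ℝ → ℝ := Set.IccExtend hab fun x => φ x
  have hψ : Measurable ψ := ((Set.monotoneOn_iff_monotone.1 hφ).IccExtend hab).measurable
  have hψφ : ∀ᵐ ω ∂ξ, ψ (X ω) = φ (X ω) :=
    hXab.mono fun ω hω => Set.IccExtend_of_mem hab _ hω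
  refine Integrable.of_mem_Icc (φ a) (φ b) ((hψ.comp hX).aemeasurable.congr hψφ) ?_
  filter_upwards [hXab] with ω hω
  exact ⟨hφ (Set.left_mem_Icc.2 hab) hω hω.1, hφ hω (Set.right_mem_Icc.2 hab) hω.2⟩

lemma ae_eq_const_of_strictMonoOn_of_eq_integral [IsProbabilityMeasure ξ]
    (hφ : StrictMonoOn φ (Set.Icc a b)) (hX : Measurable X) (hXab : ∀ᵐ ω ∂ξ, X ω ∈ Set.Icc a b)
    (hK : K ∈ Set.Icc a b) (hside : (∀ᵐ ω ∂ξ, X ω ≤ K) ∨ ∀ᵐ ω ∂ξ, K ≤ X ω)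
    (heq : φ K = ∫ ω, φ (X ω) ∂ξ) : ∀ᵐ ω ∂ξ, X ω = K := by
  have hφX := integrable_comp_of_monotoneOn_Icc (hK.1.trans hK.2) hφ.monotoneOn hX hXab
  have hφK : Integrable (fun _ : Ω => φ K) ξ := integrable_const _
  have heq' : ∫ ω, φ (X ω) ∂ξ = ∫ _, φ K ∂ξ := by simp [heq]
  have hφ_eq : ∀ᵐ ω ∂ξ, φ (X ω) = φ K := by
    rcases hside with hle | hge
    · refine (integral_eq_iff_of_ae_le hφX hφK ?_).1 heq'
      filter_upwards [hle, hXab] with ω hω hmem using hφ.monotoneOn hmem hK hω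
    · refine ((integral_eq_iff_of_ae_le hφK hφX ?_).1 heq'.symm).symm
      filter_upwards [hge, hXab] with ω hω hmem using hφ.monotoneOn hK hmem hω
  filter_upwards [hφ_eq, hXab] with ω hω hmem using hφ.injOn hmem hK hω

lemma ae_eq_const_of_strictMonoOn_or_strictAntiOn_of_eq_integral [IsProbabilityMeasure ξ]
    (hφ : StrictMonoOn φ (Set.Icc a b) ∨ StrictAntiOn φ (Set.Icc a b)) (hX : Measurable X)
    (hXab : ∀ᵐ ω ∂ξ, X ω ∈ Set.Icc a b) (hK : K ∈ Set.Icc a b)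
    (hside : (∀ᵐ ω ∂ξ, X ω ≤ K) ∨ ∀ᵐ ω ∂ξ, K ≤ X ω) (heq : φ K = ∫ ω, φ (X ω) ∂ξ) :
    ∀ᵐ ω ∂ξ, X ω = K := by
  rcases hφ with hmono | hanti
  · exact ae_eq_const_of_strictMonoOn_of_eq_integral hmono hX hXab hK hside heq
  · refine ae_eq_const_of_strictMonoOn_of_eq_integral hanti.neg hX hXab hK hside ?_
    simp [integral_neg, heq]

end MonotoneIntegral

section TwoPoint

variable {ι : Type*} [DecidableEq ι]

/-- The two-point law `p δ_x + (1 - p) δ_y`; for `x = y` it is the point mass at `x`. -/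
noncomputable def twoPoint (x y : ι) (p : ℝ) : ι → ℝ :=
  p • Pi.single x 1 + (1 - p) • Pi.single y 1

lemma twoPoint_apply (x y : ι) (p : ℝ) (z : ι) :
    twoPoint x y p z = p * (if z = x then 1 else 0) + (1 - p) * (if z = y then 1 else 0) := by
  simp [twoPoint, Pi.single_apply]

lemma sum_twoPoint_mul [Fintype ι] (x y : ι) (p : ℝ) (g : ι → ℝ) :
    ∑ z, twoPoint x y p z * g z = p * g x + (1 - p) * g y := by
  simp [twoPoint_apply, add_mul, Finset.sum_add_distrib]

lemma isProbDist_twoPoint [Fintype ι] (x y : ι) {p : ℝ} (hp : p ∈ Set.Icc 0 1) :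
    IsProbDist (twoPoint x y p) := by
  have hp₀ : 0 ≤ p := hp.1
  have hp₁ : 0 ≤ 1 - p := sub_nonneg.2 hp.2
  refine ⟨fun z => ?_, by simpa using sum_twoPoint_mul x y p fun _ => 1⟩
  rw [twoPoint_apply]
  positivity

end TwoPoint

section Tilting

variable {d k : ℕ}

/-- The product `⊗ᵢ (λ⁽ⁱ⁾ ⋆ μ)ᵢ` of the tilted marginals, to which `F` is applied on the right-hand
side of the reduction. -/
noncomputable def tiltedProduct (lam : Fin d → Fin d → Fin k → ℝ) (μ : (Fin d → Fin k) → ℝ) :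
    (Fin d → Fin k) → ℝ :=
  prodMeasure fun i => marg (tilt (lam i) μ) i

/-- The weight of the first point of `p δ_x + (1 - p) δ_y` after reweighting `x` by `s` and `y`
by `t` and normalising. -/
noncomputable def reweight (p s t : ℝ) : ℝ :=
  p * s / (p * s + (1 - p) * t)

lemma one_sub_reweight {p s t : ℝ} (h : p * s + (1 - p) * t ≠ 0) :
    1 - reweight p s t = (1 - p) * t / (p * s + (1 - p) * t) := by
  rw [reweight, one_sub_div h, add_sub_cancel_left]

lemma reweight_mem_Ioo {p s t : ℝ} (hp : p ∈ Set.Ioo 0 1) (hs : 0 < s) (ht : 0 < t) :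
    reweight p s t ∈ Set.Ioo 0 1 := by
  have hps : 0 < p * s := mul_pos hp.1 hs
  have hpt : 0 < (1 - p) * t := mul_pos (sub_pos.2 hp.2) ht
  exact ⟨div_pos hps (by positivity), (div_lt_one (by positivity)).2 (by linarith)⟩

lemma Gfun_prodMeasure (B : Matrix (Fin k) (Fin k) ℝ) (ν : Fin d → Fin k → ℝ) (c : Fin k) :
    Gfun B (prodMeasure ν) c = ∏ i, ∑ b, ν i b * B c b := by
  simp [Finset.prod_univ_sum, Gfun, prodMeasure, Finset.prod_mul_distrib]

lemma sum_marg_mul (μ : (Fin d → Fin k) → ℝ) (i : Fin d) (g : Fin k → ℝ) :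
    ∑ b, marg μ i b * g b = ∑ σ, μ σ * g (σ i) := by
  simp_rw [marg, Finset.sum_mul]
  rw [Finset.sum_comm]
  simp [ite_mul]

lemma tilt_twoPoint {lam : Fin d → Fin k → ℝ} {σ τ : Fin d → Fin k} {p : ℝ}
    (h : p * ∏ i, lam i (σ i) + (1 - p) * ∏ i, lam i (τ i) ≠ 0) :
    tilt lam (twoPoint σ τ p) =
      twoPoint σ τ (reweight p (∏ i, lam i (σ i)) (∏ i, lam i (τ i))) := by
  funext ρ
  rw [tilt, sum_twoPoint_mul, twoPoint_apply, twoPoint_apply, one_sub_reweight h, reweight]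
  split_ifs <;> subst_vars <;> ring

lemma Gfun_tiltedProduct_twoPoint (B : Matrix (Fin k) (Fin k) ℝ)
    {lam : Fin d → Fin d → Fin k → ℝ} {b₁ b₂ : Fin k} {p : ℝ}
    (h : ∀ i, p * ∏ j, lam i j b₁ + (1 - p) * ∏ j, lam i j b₂ ≠ 0) (c : Fin k) :
    Gfun B (tiltedProduct lam (twoPoint (fun _ => b₁) (fun _ => b₂) p)) c =
      ∏ i, (reweight p (∏ j, lam i j b₁) (∏ j, lam i j b₂) * B c b₁ +
        (1 - reweight p (∏ j, lam i j b₁) (∏ j, lam i j b₂)) * B c b₂) := by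
  rw [tiltedProduct, Gfun_prodMeasure]
  refine Finset.prod_congr rfl fun i _ => ?_
  rw [sum_marg_mul, tilt_twoPoint (h i), sum_twoPoint_mul]

lemma Gfun_twoPoint_const (B : Matrix (Fin k) (Fin k) ℝ) (b₁ b₂ : Fin k) (p : ℝ) (c : Fin k) :
    Gfun B (twoPoint (fun _ : Fin d => b₁) (fun _ => b₂) p) c =
      p * B c b₁ ^ d + (1 - p) * B c b₂ ^ d := by
  simp [Gfun, sum_twoPoint_mul]

-- A vanishing normalisation makes `tilt` zero because `x / 0 = 0`.
lemma tiltedProduct_eq_zero {lam : Fin d → Fin d → Fin k → ℝ} {μ : (Fin d → Fin k) → ℝ} {i : Fin d}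
    (h : ∑ σ, μ σ * ∏ j, lam i j (σ j) = 0) : tiltedProduct lam μ = 0 := by
  funext σ
  refine Finset.prod_eq_zero (Finset.mem_univ i) ?_
  simp [marg, tilt, h]

lemma measurable_Ffun_tiltedProduct (B : Matrix (Fin k) (Fin k) ℝ) (μ : (Fin d → Fin k) → ℝ)
    (c : Fin k) : Measurable fun lam => Ffun B (tiltedProduct lam μ) c := by
  simp only [Ffun, Gfun, tiltedProduct, prodMeasure, marg, tilt, ← Finset.sum_filter]
  fun_prop

end Tilting

section Reduction

variable {d k : ℕ} {B : Matrix (Fin k) (Fin k) ℝ} {s b b₁ b₂ : Fin k}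
  {lam : Fin d → Fin d → Fin k → ℝ}

lemma Ffun_zero : Ffun B (0 : (Fin d → Fin k) → ℝ) s = 0 := by
  simp [Ffun, Gfun]

lemma Ffun_twoPoint_const (hrow : B s b₂ = B s b₁)
    (hsum : ∑ c, B c b₂ ^ d = ∑ c, B c b₁ ^ d) (p : ℝ) :
    Ffun B (twoPoint (fun _ : Fin d => b₁) (fun _ => b₂) p) s =
      B s b₁ ^ d / ∑ c, B c b₁ ^ d := by
  simp_rw [Ffun, Gfun_twoPoint_const, Finset.sum_add_distrib, ← Finset.mul_sum, hsum, hrow]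
  ring_nf

lemma Ffun_tiltedProduct_pointMass_of_ne_zero (h : ∀ i, ∏ j, lam i j b ≠ 0) (p : ℝ) :
    Ffun B (tiltedProduct lam (twoPoint (fun _ => b) (fun _ => b) p)) s =
      B s b ^ d / ∑ c, B c b ^ d := by
  have hnorm (i : Fin d) : p * ∏ j, lam i j b + (1 - p) * ∏ j, lam i j b ≠ 0 := by
    simpa [← add_mul] using h i
  simp [Ffun, Gfun_tiltedProduct_twoPoint B hnorm, ← add_mul]

lemma Ffun_tiltedProduct_pointMass_of_eq_zero {i : Fin d} (h : ∏ j, lam i j b = 0) (p : ℝ) :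
    Ffun B (tiltedProduct lam (twoPoint (fun _ => b) (fun _ => b) p)) s = 0 := by
  have hnorm : ∑ σ, twoPoint (fun _ => b) (fun _ => b) p σ * ∏ j, lam i j (σ j) = 0 := by
    simp [sum_twoPoint_mul, h]
  rw [tiltedProduct_eq_zero hnorm, Ffun_zero]

lemma Ffun_tiltedProduct_twoPoint_mem_Ioc (hd : 2 ≤ d) (h₁ : ∀ c, 0 ≤ B c b₁)
    (h₂ : ∀ c, 0 ≤ B c b₂) (hs : 0 < B s b₁) (hrow : B s b₂ = B s b₁)
    (hsum : ∑ c, B c b₂ ^ d = ∑ c, B c b₁ ^ d) (hne : ∃ c, B c b₁ ≠ B c b₂)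
    (hlam₁ : ∀ i, 0 < ∏ j, lam i j b₁) (hlam₂ : ∀ i, 0 < ∏ j, lam i j b₂)
    {p : ℝ} (hp : p ∈ Set.Ioo 0 1) :
    Ffun B (tiltedProduct lam (twoPoint (fun _ => b₁) (fun _ => b₂) p)) s ∈
      Set.Ioc (B s b₁ ^ d / ∑ c, B c b₁ ^ d) 1 := by
  set r : Fin d → ℝ := fun i => reweight p (∏ j, lam i j b₁) (∏ j, lam i j b₂)
  have hr (i : Fin d) : r i ∈ Set.Ioo 0 1 := reweight_mem_Ioo hp (hlam₁ i) (hlam₂ i)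
  have hnorm (i : Fin d) : p * ∏ j, lam i j b₁ + (1 - p) * ∏ j, lam i j b₂ ≠ 0 :=
    (add_pos (mul_pos hp.1 (hlam₁ i)) (mul_pos (sub_pos.2 hp.2) (hlam₂ i))).ne'
  have hG (c : Fin k) : Gfun B (tiltedProduct lam (twoPoint (fun _ => b₁) (fun _ => b₂) p)) c =
      ∏ i, (r i * B c b₁ + (1 - r i) * B c b₂) := Gfun_tiltedProduct_twoPoint B hnorm c
  set g : Fin k → ℝ := fun c => ∏ i, (r i * B c b₁ + (1 - r i) * B c b₂)
  have hg (c : Fin k) : 0 ≤ g c := Finset.prod_nonneg fun i _ =>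
    add_nonneg (mul_nonneg (hr i).1.le (h₁ c)) (mul_nonneg (sub_nonneg.2 (hr i).2.le) (h₂ c))
  have hgs : g s = B s b₁ ^ d := by simp [g, hrow, ← add_mul]
  have hg_sum_pos : 0 < ∑ c, g c :=
    Finset.sum_pos' (fun c _ => hg c) ⟨s, Finset.mem_univ s, hgs ▸ pow_pos hs d⟩
  have hg_sum_lt : ∑ c, g c < ∑ c, B c b₁ ^ d := by
    simpa using sum_prod_mix_lt (ι := Fin d) (by simpa using hd) h₁ h₂ hne (by simpa using hsum) hr
  rw [Ffun, hG, Finset.sum_congr rfl fun c _ => hG c]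
  refine ⟨?_, (div_sum_mem_Icc hg s).2⟩
  rw [← hgs]
  exact div_lt_div_of_pos_left (hgs ▸ pow_pos hs d) hg_sum_pos hg_sum_lt

variable {φ : ℝ → ℝ} {ξ : Measure (Fin d → Fin d → Fin k → ℝ)} [IsProbabilityMeasure ξ]

lemma ae_prod_field_ne_zero (hB : ∀ c, 0 ≤ B c b) (hs : 0 < B s b)
    (hφ : StrictMonoOn φ (Set.Icc 0 1) ∨ StrictAntiOn φ (Set.Icc 0 1))
    (hred : ∀ μ, IsProbDist μ → φ (Ffun B μ s) = ∫ lam, φ (Ffun B (tiltedProduct lam μ) s) ∂ξ) :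
    ∀ᵐ lam ∂ξ, ∀ i, ∏ j, lam i j b ≠ 0 := by
  set μ : (Fin d → Fin k) → ℝ := twoPoint (fun _ => b) (fun _ => b) 1
  set K := B s b ^ d / ∑ c, B c b ^ d
  have hμ : IsProbDist μ := isProbDist_twoPoint _ _ (by simp)
  have hFμ : Ffun B μ s = K := Ffun_twoPoint_const rfl rfl 1
  have hK : K ∈ Set.Icc (0 : ℝ) 1 := div_sum_mem_Icc (fun c => pow_nonneg (hB c) d) s
  have hK_pos : 0 < K := div_pos (pow_pos hs d) <|
    Finset.sum_pos' (fun c _ => pow_nonneg (hB c) d) ⟨s, Finset.mem_univ s, pow_pos hs d⟩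
  have hF_mem (lam : Fin d → Fin d → Fin k → ℝ) : Ffun B (tiltedProduct lam μ) s ∈ Set.Icc 0 K := by
    by_cases hlam : ∀ i, ∏ j, lam i j b ≠ 0
    · rw [Ffun_tiltedProduct_pointMass_of_ne_zero hlam]
      exact ⟨hK.1, le_rfl⟩
    · push Not at hlam
      obtain ⟨i, hi⟩ := hlam
      rw [Ffun_tiltedProduct_pointMass_of_eq_zero hi]
      exact ⟨le_rfl, hK.1⟩
  have hF_eq : ∀ᵐ lam ∂ξ, Ffun B (tiltedProduct lam μ) s = K :=
    ae_eq_const_of_strictMonoOn_or_strictAntiOn_of_eq_integral hφ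
      (measurable_Ffun_tiltedProduct B μ s)
      (.of_forall fun lam => Set.Icc_subset_Icc_right hK.2 (hF_mem lam)) hK
      (.inl (.of_forall fun lam => (hF_mem lam).2)) (hFμ ▸ hred μ hμ)
  filter_upwards [hF_eq] with lam hlam i hi
  rw [Ffun_tiltedProduct_pointMass_of_eq_zero hi] at hlam
  exact hK_pos.ne hlam

end Reduction

section Bmat

variable {q : ℕ} (β : ℝ) (A : Matrix (Fin q) (Fin q) ℝ)

lemma Bmat_zero_succ (a : Fin q) : Bmat β A 0 a.succ = 1 := by
  simp [Bmat]

lemma Bmat_succ_succ (c a : Fin q) : Bmat β A c.succ a.succ = A c a := by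
  simp [Bmat]

variable {A} in
lemma Bmat_succ_nonneg {a : Fin q} (hA : ∀ c, 0 ≤ A c a) (c : Fin (q + 1)) :
    0 ≤ Bmat β A c a.succ := by
  cases c using Fin.cases with
  | zero => simp [Bmat_zero_succ]
  | succ c => simpa [Bmat_succ_succ] using hA c

lemma sum_Bmat_succ_pow (a : Fin q) (d : ℕ) :
    ∑ c, Bmat β A c a.succ ^ d = 1 + ∑ c, A c a ^ d := by
  simp [Fin.sum_univ_succ, Bmat_zero_succ, Bmat_succ_succ]

end Bmat

theorem stmt0_general {k d : ℕ} (hd : 2 ≤ d) {B : Matrix (Fin k) (Fin k) ℝ} {s b₁ b₂ : Fin k}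
    (h₁ : ∀ c, 0 ≤ B c b₁) (h₂ : ∀ c, 0 ≤ B c b₂) (hs : 0 < B s b₁) (hrow : B s b₂ = B s b₁)
    (hsum : ∑ c, B c b₂ ^ d = ∑ c, B c b₁ ^ d) (hne : ∃ c, B c b₁ ≠ B c b₂) {φ : ℝ → ℝ}
    (hφ : StrictMonoOn φ (Set.Icc 0 1) ∨ StrictAntiOn φ (Set.Icc 0 1)) :
    ¬ ∃ ξ : Measure (Fin d → Fin d → Fin k → ℝ),
        IsProbabilityMeasure ξ ∧
        (∀ᵐ lam ∂ξ, ∀ i j c, 0 ≤ lam i j c) ∧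
        ∀ μ : (Fin d → Fin k) → ℝ, IsProbDist μ →
          φ (Ffun B μ s) = ∫ lam, φ (Ffun B (tiltedProduct lam μ) s) ∂ξ := by
  rintro ⟨ξ, _, hnonneg, hred⟩
  set μ : (Fin d → Fin k) → ℝ := twoPoint (fun _ => b₁) (fun _ => b₂) (1 / 2)
  set K := B s b₁ ^ d / ∑ c, B c b₁ ^ d
  have hμ : IsProbDist μ := isProbDist_twoPoint _ _ (by norm_num)
  have hFμ : Ffun B μ s = K := Ffun_twoPoint_const hrow hsum _
  have hK : K ∈ Set.Icc (0 : ℝ) 1 := div_sum_mem_Icc (fun c => pow_nonneg (h₁ c) d) s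
  have hF_mem : ∀ᵐ lam ∂ξ, Ffun B (tiltedProduct lam μ) s ∈ Set.Ioc K 1 := by
    filter_upwards [hnonneg, ae_prod_field_ne_zero h₁ hs hφ hred,
      ae_prod_field_ne_zero h₂ (hrow ▸ hs) hφ hred] with lam hlam hne₁ hne₂
    have hprod (b : Fin k) (i : Fin d) : 0 ≤ ∏ j, lam i j b :=
      Finset.prod_nonneg fun j _ => hlam i j b
    exact Ffun_tiltedProduct_twoPoint_mem_Ioc hd h₁ h₂ hs hrow hsum hne
      (fun i => (hprod b₁ i).lt_of_ne' (hne₁ i)) (fun i => (hprod b₂ i).lt_of_ne' (hne₂ i))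
      (by norm_num)
  have hF_eq : ∀ᵐ lam ∂ξ, Ffun B (tiltedProduct lam μ) s = K :=
    ae_eq_const_of_strictMonoOn_or_strictAntiOn_of_eq_integral hφ
      (measurable_Ffun_tiltedProduct B μ s)
      (hF_mem.mono fun lam h => ⟨hK.1.trans h.1.le, h.2⟩) hK
      (.inr (hF_mem.mono fun lam h => h.1.le)) (hFμ ▸ hred μ hμ)
  obtain ⟨lam, hmem, heq⟩ := (hF_mem.and hF_eq).exists
  exact hmem.1.ne' heq

/-- Theorem: no universal Weitz-style reduction for `B(β,A)`.
For `q ≥ 3`, `d ≥ 2`, `β ≥ 1` and a symmetric interaction matrix `A` with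
`A ≥ 1 1ᵀ` entrywise (strictly somewhere), `|𝓜(d,A)| ≥ 2` and `A c a₁ ≠ A c a₂`
for some `c` and `a₁, a₂ ∈ 𝓜(d,A)`: for every strictly monotone potential
`φ : [0,1] → ℝ` there is no universal probability distribution `ξ` on `d`-tuples
of nonnegative external fields such that
`φ(F_B(μ)) = E_{λ∼ξ}[φ(F_B(⊗ᵢ (λ⁽ⁱ⁾ ⋆ μ)ᵢ))]` for every distribution `μ` on
`([q] ∪ {c*})^d`. -/
theorem stmt0 (q d : ℕ) (hq : 3 ≤ q) (hd : 2 ≤ d) (β : ℝ) (hβ : 1 ≤ β)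
    (A : Matrix (Fin q) (Fin q) ℝ) (hsymm : A.IsSymm)
    (hge : ∀ c b, (1:ℝ) ≤ A c b) (hstrict : ∃ c b, (1:ℝ) < A c b)
    (hMcard : 2 ≤ (Mset d A).ncard)
    (hMne : ∃ c, ∃ a₁ ∈ Mset d A, ∃ a₂ ∈ Mset d A, A c a₁ ≠ A c a₂)
    (φ : ℝ → ℝ)
    (hφ : StrictMonoOn φ (Set.Icc 0 1) ∨ StrictAntiOn φ (Set.Icc 0 1)) :
    ¬ ∃ ξ : Measure (Fin d → Fin d → Fin (q+1) → ℝ),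
        IsProbabilityMeasure ξ ∧
        (∀ᵐ lam ∂ξ, ∀ i j c, 0 ≤ lam i j c) ∧
        ∀ μ : (Fin d → Fin (q+1)) → ℝ, IsProbDist μ →
          ∀ c, φ (Ffun (Bmat β A) μ c) =
            ∫ lam, φ (Ffun (Bmat β A)
              (prodMeasure (fun i => marg (tilt (lam i) μ) i)) c) ∂ξ := by
  rintro ⟨ξ, hξ, hnonneg, hred⟩
  obtain ⟨c, a₁, h₁, a₂, h₂, hc⟩ := hMne
  have hA (a c : Fin q) : 0 ≤ A c a := zero_le_one.trans (hge c a)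
  have hsum : ∑ c, A c a₂ ^ d = ∑ c, A c a₁ ^ d := le_antisymm (h₁ a₂) (h₂ a₁)
  exact stmt0_general (s := 0) hd (Bmat_succ_nonneg β (hA a₁)) (Bmat_succ_nonneg β (hA a₂))
    (by simp [Bmat_zero_succ]) (by simp [Bmat_zero_succ]) (by simp [sum_Bmat_succ_pow, hsum])
    ⟨c.succ, by simpa [Bmat_succ_succ] using hc⟩ hφ
    ⟨ξ, hξ, hnonneg, fun μ hμ => hred μ hμ 0⟩
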